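/- arXiv:2010.02664 — 5 statements merged into one kernel-verified Lean document; each statement's English description precedes it below -/
import Mathlib

section
/- Let β > 0, T > 0, h = T/(N+1), t_j = jh, and let y : [0,T] → ℝ be twice continuously differentiable. For each j let L¹_j y denote the linear interpolant of y at t_j and t_{j+1}, i.e. L¹_j y(t) = ((t_{j+1}−t)/h) y(t_j) + ((t−t_j)/h) y(t_{j+1}). Then for every 0 ≤ n ≤ N the truncation error Tₙ₊₁ = β Σ_{j=0}^{n} ∫_{t_j}^{t_{j+1}} (y(s) − L¹_j y(s)) exp(−β(t_{n+1}−s)) ds satisfies |Tₙ₊₁| ≤ (‖y″‖_∞ / 2) (1 − exp(−β t_{n+1})) h², where ‖y″‖_∞ = sup_{t∈[0,T]} |y″(t)|. -/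
open Real MeasureTheory Finset

lemma aux_convex (T M : ℝ) (hT : 0 < T) (y : ℝ → ℝ) (hy : ContDiffOn ℝ 2 y (Set.Icc 0 T))
    (hM : ∀ t ∈ Set.Icc (0 : ℝ) T, -M ≤ iteratedDerivWithin 2 y (Set.Icc (0 : ℝ) T) t) :
    ConvexOn ℝ (Set.Icc 0 T) (fun t => y t + M / 2 * t ^ 2) := by
  have hu : UniqueDiffOn ℝ (Set.Icc (0 : ℝ) T) := uniqueDiffOn_Icc hT
  have h1 : ContDiffOn ℝ 1 (derivWithin y (Set.Icc 0 T)) (Set.Icc 0 T) :=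
    hy.derivWithin hu (by norm_num)
  have hd1 := hy.differentiableOn (by norm_num)
  have hd2 := h1.differentiableOn (by norm_num)
  refine convexOn_of_hasDerivWithinAt2_nonneg (convex_Icc 0 T)
    (hy.continuousOn.add (by fun_prop))
    (f' := fun t => derivWithin y (Set.Icc 0 T) t + M * t)
    (f'' := fun t => derivWithin (derivWithin y (Set.Icc 0 T)) (Set.Icc 0 T) t + M) ?_ ?_ ?_
  · intro x hx
    have a := ((hd1 x (interior_subset hx)).hasDerivWithinAt).mono
      (interior_subset (s := Set.Icc 0 T))
    have b := (((hasDerivAt_id x).pow 2).const_mul (M / 2)).hasDerivWithinAt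
      (s := interior (Set.Icc 0 T))
    refine (a.add b).congr_deriv ?_
    simp
    ring
  · intro x hx
    have a := ((hd2 x (interior_subset hx)).hasDerivWithinAt).mono
      (interior_subset (s := Set.Icc 0 T))
    have b := ((hasDerivAt_id x).const_mul M).hasDerivWithinAt
      (s := interior (Set.Icc 0 T))
    refine (a.add b).congr_deriv ?_
    simp
  · intro x hx
    have := hM x (interior_subset hx)
    have e : iteratedDerivWithin 1 y (Set.Icc (0 : ℝ) T) = derivWithin y (Set.Icc 0 T) := by
      simp [iteratedDerivWithin_one]
    rw [iteratedDerivWithin_succ, e] at this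
    linarith

lemma aux_upper (T M : ℝ) (hT : 0 < T) (hM0 : 0 ≤ M) (y : ℝ → ℝ)
    (hy : ContDiffOn ℝ 2 y (Set.Icc 0 T))
    (hM : ∀ t ∈ Set.Icc (0 : ℝ) T, -M ≤ iteratedDerivWithin 2 y (Set.Icc (0 : ℝ) T) t)
    (a b h s : ℝ) (hh : 0 < h) (hb : b = a + h) (ha0 : 0 ≤ a) (hbT : b ≤ T)
    (hs : s ∈ Set.Icc a b) :
    y s - ((b - s) / h * y a + (s - a) / h * y b) ≤ M / 2 * h ^ 2 := by
  have hc := aux_convex T M hT y hy hM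
  obtain ⟨hs1, hs2⟩ := hs
  have ham : a ∈ Set.Icc 0 T := ⟨ha0, by linarith⟩
  have hbm : b ∈ Set.Icc 0 T := ⟨by linarith, hbT⟩
  have p1 : 0 ≤ (b - s) / h := div_nonneg (by linarith) hh.le
  have p2 : 0 ≤ (s - a) / h := div_nonneg (by linarith) hh.le
  have key := hc.2 ham hbm p1 p2 (by field_simp; linarith)
  have e : (b - s) / h * a + (s - a) / h * b = s := by
    subst hb; field_simp; ring
  simp only [smul_eq_mul, e] at key
  have e2 : (b - s) / h * a ^ 2 + (s - a) / h * b ^ 2 = s ^ 2 + (s - a) * (b - s) := by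
    subst hb; field_simp; ring
  have e3 : (s - a) * (b - s) ≤ h ^ 2 := by subst hb; nlinarith
  have e4 : M / 2 * ((s - a) * (b - s)) ≤ M / 2 * h ^ 2 := by gcongr
  have e5 := congrArg (fun z => M / 2 * z) e2
  linarith

lemma aux_abs (T M : ℝ) (hT : 0 < T) (hM0 : 0 ≤ M) (y : ℝ → ℝ)
    (hy : ContDiffOn ℝ 2 y (Set.Icc 0 T))
    (hM : ∀ t ∈ Set.Icc (0 : ℝ) T, |iteratedDerivWithin 2 y (Set.Icc (0 : ℝ) T) t| ≤ M)
    (a b h s : ℝ) (hh : 0 < h) (hb : b = a + h) (ha0 : 0 ≤ a) (hbT : b ≤ T)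
    (hs : s ∈ Set.Icc a b) :
    |y s - ((b - s) / h * y a + (s - a) / h * y b)| ≤ M / 2 * h ^ 2 := by
  have u1 := aux_upper T M hT hM0 y hy (fun t ht => (abs_le.1 (hM t ht)).1) a b h s hh hb ha0 hbT hs
  have u2 := aux_upper T M hT hM0 (fun t => -y t) hy.neg (fun t ht => by
    rw [iteratedDerivWithin_fun_neg]
    linarith [(abs_le.1 (hM t ht)).2]) a b h s hh hb ha0 hbT hs
  rw [abs_le]
  constructor <;> linarith

/-- Truncation error of the linear-interpolation quadrature for the exponential-kernel
Volterra integral: `|Tₙ₊₁| ≤ (‖y″‖_∞/2) (1 - exp(-β tₙ₊₁)) h²`. -/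
theorem linear_truncation_error
    (β T : ℝ) (N : ℕ) (h : ℝ) (hβ : 0 < β) (hT : 0 < T) (hh : h = T / (N + 1))
    (y : ℝ → ℝ) (hy : ContDiffOn ℝ 2 y (Set.Icc 0 T)) :
    ∀ n ≤ N,
      |β * ∑ j ∈ Finset.range (n + 1),
          ∫ s in ((j : ℝ) * h)..(((j : ℝ) + 1) * h),
            (y s - (((((j : ℝ) + 1) * h - s) / h) * y ((j : ℝ) * h)
              + ((s - (j : ℝ) * h) / h) * y (((j : ℝ) + 1) * h)))
              * Real.exp (-β * (((n : ℝ) + 1) * h - s))|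
        ≤ (sSup ((fun t => |iteratedDerivWithin 2 y (Set.Icc (0 : ℝ) T) t|) ''
              Set.Icc (0 : ℝ) T) / 2)
            * (1 - Real.exp (-β * (((n : ℝ) + 1) * h))) * h ^ 2 := by
  intro n hn
  have hu : UniqueDiffOn ℝ (Set.Icc (0 : ℝ) T) := uniqueDiffOn_Icc hT
  have hcont : ContinuousOn (fun t => |iteratedDerivWithin 2 y (Set.Icc (0 : ℝ) T) t|)
      (Set.Icc (0 : ℝ) T) := (hy.continuousOn_iteratedDerivWithin (by norm_num) hu).abs
  have hbdd := (isCompact_Icc.image_of_continuousOn hcont).bddAbove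
  have hM : ∀ t ∈ Set.Icc (0 : ℝ) T, |iteratedDerivWithin 2 y (Set.Icc (0 : ℝ) T) t| ≤
      sSup ((fun t => |iteratedDerivWithin 2 y (Set.Icc (0 : ℝ) T) t|) '' Set.Icc (0 : ℝ) T) :=
    fun t ht => le_csSup hbdd ⟨t, ht, rfl⟩
  generalize sSup ((fun t => |iteratedDerivWithin 2 y (Set.Icc (0 : ℝ) T) t|) ''
    Set.Icc (0 : ℝ) T) = M at hM ⊢
  have hM0 : 0 ≤ M := (abs_nonneg _).trans (hM 0 ⟨le_rfl, hT.le⟩)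
  have hpos : 0 < h := by rw [hh]; positivity
  have hTN : ((N : ℝ) + 1) * h = T := by rw [hh]; field_simp
  set c : ℝ := ((n : ℝ) + 1) * h with hc
  let g : ℕ → ℝ := fun j => M / 2 * h ^ 2 * (Real.exp (-β * (c - (j : ℝ) * h)) / β)
  have hterm : ∀ j ∈ Finset.range (n + 1),
      |∫ s in ((j : ℝ) * h)..(((j : ℝ) + 1) * h),
            (y s - (((((j : ℝ) + 1) * h - s) / h) * y ((j : ℝ) * h)
              + ((s - (j : ℝ) * h) / h) * y (((j : ℝ) + 1) * h)))
              * Real.exp (-β * (c - s))| ≤ g (j + 1) - g j := by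
    intro j hj
    have hjn : j ≤ N := by have := Finset.mem_range.1 hj; omega
    have hjN : (j : ℝ) ≤ N := by exact_mod_cast hjn
    have hab : (j : ℝ) * h ≤ ((j : ℝ) + 1) * h := by nlinarith
    have hbT : ((j : ℝ) + 1) * h ≤ T := by rw [← hTN]; gcongr
    have hint : ∫ s in ((j : ℝ) * h)..(((j : ℝ) + 1) * h),
        M / 2 * h ^ 2 * Real.exp (-β * (c - s)) = g (j + 1) - g j := by
      rw [intervalIntegral.integral_eq_sub_of_hasDerivAt
        (f := fun s => M / 2 * h ^ 2 * (Real.exp (-β * (c - s)) / β))]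
      · simp [g]
      · intro s _
        have := (((((hasDerivAt_id s).const_sub c).const_mul (-β)).exp).div_const β).const_mul
          (M / 2 * h ^ 2)
        refine this.congr_deriv ?_
        simp only [id]
        field_simp
      · exact (by fun_prop : Continuous fun s =>
          M / 2 * h ^ 2 * Real.exp (-β * (c - s))).intervalIntegrable _ _
    rw [← hint, ← Real.norm_eq_abs]
    refine intervalIntegral.norm_integral_le_of_norm_le hab (Filter.Eventually.of_forall ?_)
      ((by fun_prop : Continuous fun s =>
          M / 2 * h ^ 2 * Real.exp (-β * (c - s))).intervalIntegrable _ _)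
    intro s hs
    rw [Real.norm_eq_abs, abs_mul, abs_of_pos (Real.exp_pos _)]
    gcongr
    exact aux_abs T M hT hM0 y hy hM _ _ h s hpos (by ring) (by positivity) hbT ⟨hs.1.le, hs.2⟩
  rw [abs_mul, abs_of_pos hβ]
  calc _ ≤ β * (g (n + 1) - g 0) := by
        gcongr
        rw [← Finset.sum_range_sub]
        exact (Finset.abs_sum_le_sum_abs _ _).trans (Finset.sum_le_sum hterm)
    _ = _ := by
        simp only [g]
        push_cast
        rw [← hc]
        simp
        field_simp
end

section
/- Under the linear predictor–corrector setup (see context), there exist h₀ > 0 and a constant C, both depending only on α, M, L, T, y and f but not on the grid, such that for all 0 < h ≤ h₀ and all 1 ≤ n ≤ N the predictor error satisfies |Eᴾₙ₊₁| ≤ (2L(1−α)/M)(|Eₙ₋₁| + 2|Eₙ|) + 4βh Σ_{j=1}^{n} |E_j| + C h². -/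
open Real MeasureTheory Finset

/-- Weight `B¹ₙ₊₁ʲ` of the linear-interpolation predictor–corrector scheme. -/
noncomputable def linB1 (β h : ℝ) (n j : ℕ) : ℝ :=
  (1 / h) * ∫ s in ((j : ℝ) * h)..(((j : ℝ) + 1) * h),
    (((j : ℝ) + 1) * h - s) * Real.exp (-β * (((n : ℝ) + 1) * h - s))

/-- Weight `B²ₙ₊₁ʲ` of the linear-interpolation predictor–corrector scheme. -/
noncomputable def linB2 (β h : ℝ) (n j : ℕ) : ℝ :=
  (1 / h) * ∫ s in ((j : ℝ) * h)..(((j : ℝ) + 1) * h),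
    (s - (j : ℝ) * h) * Real.exp (-β * (((n : ℝ) + 1) * h - s))

theorem aux_taylor (T : ℝ) (hT : 0 < T) (g : ℝ → ℝ) (hg : ContDiffOn ℝ 2 g (Set.Icc 0 T)) :
    ∃ K : ℝ, 0 ≤ K ∧ ∃ g' : ℝ → ℝ, ∀ a ∈ Set.Icc (0 : ℝ) T, ∀ x ∈ Set.Icc (0 : ℝ) T,
      |g x - g a - g' a * (x - a)| ≤ K * (x - a) ^ 2 := by
  have hu : UniqueDiffOn ℝ (Set.Icc (0 : ℝ) T) := uniqueDiffOn_Icc hT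
  have hd : ContDiffOn ℝ 1 (derivWithin g (Set.Icc 0 T)) (Set.Icc 0 T) :=
    hg.derivWithin hu (by norm_num)
  obtain ⟨K, hK⟩ := hd.exists_lipschitzOnWith (by norm_num) (convex_Icc 0 T) isCompact_Icc
  refine ⟨K, K.2, derivWithin g (Set.Icc 0 T), ?_⟩
  intro a ha x hx
  have hsub : Set.uIcc a x ⊆ Set.Icc 0 T := Set.uIcc_subset_Icc ha hx
  have key := (convex_uIcc a x).norm_image_sub_le_of_norm_hasDerivWithin_le
    (f := fun s => g s - derivWithin g (Set.Icc 0 T) a * s)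
    (f' := fun s => derivWithin g (Set.Icc 0 T) s - derivWithin g (Set.Icc 0 T) a)
    (C := K * |x - a|) (x := a) (y := x) ?_ ?_ Set.left_mem_uIcc Set.right_mem_uIcc
  · simp only [Real.norm_eq_abs] at key
    calc _ = |g x - derivWithin g (Set.Icc 0 T) a * x - (g a - derivWithin g (Set.Icc 0 T) a * a)| := by
          congr 1; ring
      _ ≤ _ := key
      _ = K * (|x - a| ^ 2) := by ring
      _ = _ := by rw [sq_abs]
  · intro s hs
    have h1 : HasDerivWithinAt g (derivWithin g (Set.Icc 0 T) s) (Set.Icc 0 T) s :=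
      ((hg.differentiableOn (by norm_num)) s (hsub hs)).hasDerivWithinAt
    have h2 := (h1.mono hsub).sub ((hasDerivWithinAt_id s (Set.uIcc a x)).const_mul
      (derivWithin g (Set.Icc 0 T) a))
    rw [mul_one] at h2
    exact h2
  · intro s hs
    have h1 := hK.dist_le_mul s (hsub hs) a ha
    rw [Real.dist_eq, Real.dist_eq] at h1
    refine h1.trans ?_
    have : |s - a| ≤ |x - a| := by
      exact Set.abs_sub_left_of_mem_uIcc hs
    gcongr

theorem aux_weight (β h : ℝ) (hβ : 0 ≤ β) (hh : 0 < h) (n j : ℕ) (hj : j ≤ n) :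
    |linB1 β h n j| ≤ h / 2 ∧ |linB2 β h n j| ≤ h / 2 := by
  have hjn : (j : ℝ) ≤ n := by exact_mod_cast hj
  have hab : (j : ℝ) * h ≤ ((j : ℝ) + 1) * h := by nlinarith
  have hexp : ∀ s ∈ Set.Icc ((j : ℝ) * h) (((j : ℝ) + 1) * h),
      Real.exp (-β * (((n : ℝ) + 1) * h - s)) ≤ 1 := by
    intro s hs
    rw [Real.exp_le_one_iff]
    have : 0 ≤ ((n : ℝ) + 1) * h - s := by nlinarith [hs.2]
    nlinarith
  have hinv : 0 ≤ 1 / h := by positivity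
  constructor
  · unfold linB1
    rw [abs_of_nonneg]
    · calc _ ≤ (1 / h) * ∫ s in ((j : ℝ) * h)..(((j : ℝ) + 1) * h), (((j : ℝ) + 1) * h - s) := by
            apply mul_le_mul_of_nonneg_left _ hinv
            apply intervalIntegral.integral_mono_on hab
            · exact Continuous.intervalIntegrable (by fun_prop) _ _
            · exact Continuous.intervalIntegrable (by fun_prop) _ _
            · intro s hs
              exact mul_le_of_le_one_right (by linarith [hs.2]) (hexp s hs)
        _ = h / 2 := by
            rw [intervalIntegral.integral_sub (by simp) (by simp)]
            simp only [intervalIntegral.integral_const, integral_id, smul_eq_mul]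
            field_simp
            ring
    · apply mul_nonneg hinv
      apply intervalIntegral.integral_nonneg hab
      intro s hs
      exact mul_nonneg (by linarith [hs.2]) (Real.exp_pos _).le
  · unfold linB2
    rw [abs_of_nonneg]
    · calc _ ≤ (1 / h) * ∫ s in ((j : ℝ) * h)..(((j : ℝ) + 1) * h), (s - (j : ℝ) * h) := by
            apply mul_le_mul_of_nonneg_left _ hinv
            apply intervalIntegral.integral_mono_on hab
            · exact Continuous.intervalIntegrable (by fun_prop) _ _
            · exact Continuous.intervalIntegrable (by fun_prop) _ _
            · intro s hs
              exact mul_le_of_le_one_right (by linarith [hs.1]) (hexp s hs)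
        _ = h / 2 := by
            rw [intervalIntegral.integral_sub (by simp) (by simp)]
            simp only [intervalIntegral.integral_const, integral_id, smul_eq_mul]
            field_simp
            ring
    · apply mul_nonneg hinv
      apply intervalIntegral.integral_nonneg hab
      intro s hs
      exact mul_nonneg (by linarith [hs.1]) (Real.exp_pos _).le

theorem aux_cell (T β h K : ℝ) (hβ : 0 ≤ β) (hh : 0 < h) (n j : ℕ) (hj : j ≤ n)
    (hn : ((n : ℝ) + 1) * h ≤ T) (y y' : ℝ → ℝ) (hyc : ContinuousOn y (Set.Icc 0 T)) (hK0 : 0 ≤ K)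
    (hK : ∀ a ∈ Set.Icc (0 : ℝ) T, ∀ x ∈ Set.Icc (0 : ℝ) T,
      |y x - y a - y' a * (x - a)| ≤ K * (x - a) ^ 2) :
    |(∫ s in ((j : ℝ) * h)..(((j : ℝ) + 1) * h), y s * Real.exp (-β * (((n : ℝ) + 1) * h - s)))
      - (linB1 β h n j * y (j * h) + linB2 β h n j * y (((j : ℝ) + 1) * h))| ≤ 2 * K * h ^ 2 * h := by
  have hjn : (j : ℝ) ≤ n := by exact_mod_cast hj
  have hab : (j : ℝ) * h ≤ ((j : ℝ) + 1) * h := by nlinarith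
  have ha0 : 0 ≤ (j : ℝ) * h := by positivity
  have hbT : ((j : ℝ) + 1) * h ≤ T := by nlinarith
  have hsub : Set.uIcc ((j : ℝ) * h) (((j : ℝ) + 1) * h) ⊆ Set.Icc 0 T := by
    rw [Set.uIcc_of_le hab]; exact Set.Icc_subset_Icc ha0 hbT
  have hi : IntervalIntegrable (fun s => y s * Real.exp (-β * (((n : ℝ) + 1) * h - s))) volume
      ((j : ℝ) * h) (((j : ℝ) + 1) * h) :=
    ContinuousOn.intervalIntegrable ((hyc.mono hsub).mul (by fun_prop))
  have e1 : linB1 β h n j * y (j * h) + linB2 β h n j * y (((j : ℝ) + 1) * h)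
      = ∫ s in ((j : ℝ) * h)..(((j : ℝ) + 1) * h),
        ((1 / h * y (j * h)) * ((((j : ℝ) + 1) * h - s) * Real.exp (-β * (((n : ℝ) + 1) * h - s)))
        + (1 / h * y (((j : ℝ) + 1) * h)) *
          ((s - (j : ℝ) * h) * Real.exp (-β * (((n : ℝ) + 1) * h - s)))) := by
    rw [intervalIntegral.integral_add (Continuous.intervalIntegrable (by fun_prop) _ _)
      (Continuous.intervalIntegrable (by fun_prop) _ _),
      intervalIntegral.integral_const_mul, intervalIntegral.integral_const_mul]
    unfold linB1 linB2
    ring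
  rw [e1, ← intervalIntegral.integral_sub hi (Continuous.intervalIntegrable (by fun_prop) _ _)]
  have := intervalIntegral.norm_integral_le_of_norm_le_const (C := 2 * K * h ^ 2)
    (a := (j : ℝ) * h) (b := ((j : ℝ) + 1) * h)
    (f := fun s => y s * Real.exp (-β * (((n : ℝ) + 1) * h - s)) -
      ((1 / h * y (j * h)) * ((((j : ℝ) + 1) * h - s) * Real.exp (-β * (((n : ℝ) + 1) * h - s)))
        + (1 / h * y (((j : ℝ) + 1) * h)) *
          ((s - (j : ℝ) * h) * Real.exp (-β * (((n : ℝ) + 1) * h - s))))) ?_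
  · rw [Real.norm_eq_abs] at this
    refine this.trans (le_of_eq ?_)
    rw [abs_of_nonneg (by linarith)]
    ring
  · intro s hs
    rw [Set.uIoc_of_le hab] at hs
    have hA : (j : ℝ) * h ∈ Set.Icc (0 : ℝ) T := ⟨ha0, by linarith⟩
    have k1 := hK _ hA s ⟨by linarith [hs.1], by linarith [hs.2]⟩
    have k2 := hK _ hA (((j : ℝ) + 1) * h) ⟨by linarith, hbT⟩
    have hE : Real.exp (-β * (((n : ℝ) + 1) * h - s)) ≤ 1 := by
      rw [Real.exp_le_one_iff]
      have : 0 ≤ ((n : ℝ) + 1) * h - s := by nlinarith [hs.2]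
      nlinarith
    have hE0 := Real.exp_pos (-β * (((n : ℝ) + 1) * h - s))
    set E := Real.exp (-β * (((n : ℝ) + 1) * h - s))
    set d := s - (j : ℝ) * h with hd
    have hd0 : 0 ≤ d := by linarith [hs.1]
    have hdh : d ≤ h := by linarith [hs.2]
    have hbs : ((j : ℝ) + 1) * h - s = h - d := by rw [hd]; ring
    have hba : ((j : ℝ) + 1) * h - (j : ℝ) * h = h := by ring
    rw [hba] at k2
    rw [hbs]
    set R1 := y s - y (j * h) - y' (j * h) * d with hR1
    set R2 := y (((j : ℝ) + 1) * h) - y (j * h) - y' (j * h) * h with hR2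
    have e : y s * E - (1 / h * y (j * h) * ((h - d) * E)
        + 1 / h * y (((j : ℝ) + 1) * h) * (d * E)) = (R1 - d / h * R2) * E := by
      rw [hR1, hR2]; field_simp; ring
    rw [e, Real.norm_eq_abs, abs_mul, abs_of_pos hE0]
    have hdh1 : d / h ≤ 1 := (div_le_one hh).2 hdh
    have hdh0 : 0 ≤ d / h := by positivity
    have k3 : |R1| ≤ K * h ^ 2 := k1.trans (by gcongr)
    have k4 : |d / h * R2| ≤ K * h ^ 2 := by
      rw [abs_mul, abs_of_nonneg hdh0]
      exact (mul_le_of_le_one_left (abs_nonneg _) hdh1).trans k2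
    have k5 : |R1 - d / h * R2| ≤ 2 * K * h ^ 2 := (abs_sub _ _).trans (by linarith)
    exact (mul_le_of_le_one_right (abs_nonneg _) hE).trans k5

theorem aux_sum (e : ℕ → ℝ) (h0 : e 0 = 0) (n : ℕ) :
    (∑ j ∈ Finset.range n, (e j + e (j + 1))) + e n = 2 * ∑ j ∈ Finset.Icc 1 n, e j := by
  induction n with
  | zero => simp [h0]
  | succ k ih =>
    rw [Finset.sum_range_succ, Finset.sum_Icc_succ_top (by omega), mul_add, ← ih]
    ring

set_option maxHeartbeats 1000000 in
/-- Predictor error bound of the linear-interpolation predictor–corrector scheme: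
`|Eᴾₙ₊₁| ≤ (2L(1-α)/M)(|Eₙ₋₁| + 2|Eₙ|) + 4βh Σ_{j=1}^n |E_j| + C h²`. -/
theorem linear_predictor_error
    (α β M T L y₀ : ℝ) (f : ℝ → ℝ → ℝ) (y : ℝ → ℝ)
    (hα : α ∈ Set.Ioo (0 : ℝ) 1) (hβ : β = α / (1 - α)) (hM : 0 < M) (hT : 0 < T)
    (hL : 0 ≤ L)
    (hf : ∀ t ∈ Set.Icc (0 : ℝ) T, ∀ u₁ u₂ : ℝ, |f t u₁ - f t u₂| ≤ L * |u₁ - u₂|)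
    (hy : ContDiffOn ℝ 2 y (Set.Icc 0 T)) (hy0 : y 0 = y₀)
    (hfy : ContDiffOn ℝ 2 (fun t => f t (y t)) (Set.Icc 0 T))
    (hint : ∀ t ∈ Set.Icc (0 : ℝ) T,
      y t = ((1 - α) / M) * f t (y t) + y₀ * Real.exp (-β * t)
        + β * ∫ s in (0 : ℝ)..t, y s * Real.exp (-β * (t - s))) :
    ∃ h₀ > (0 : ℝ), ∃ C : ℝ,
      ∀ (N : ℕ) (h : ℝ), h = T / (N + 1) → h ≤ h₀ →
        ∀ yseq yp : ℕ → ℝ,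
          yseq 0 = y₀ →
          (∀ n, 1 ≤ n → n ≤ N →
            -- predictor
            (1 - β * linB2 β h n n) * yp (n + 1)
              = (((1 - α) / M) * (-(f ((↑(n - 1) : ℝ) * h) (yseq (n - 1)))
                    + 2 * f ((n : ℝ) * h) (yseq n))
                  + y₀ * Real.exp (-β * (((n : ℝ) + 1) * h)))
                + β * ((∑ j ∈ Finset.range n,
                    (linB1 β h n j * yseq j + linB2 β h n j * yseq (j + 1)))
                  + linB1 β h n n * yseq n) ∧
            -- corrector
            (1 - β * linB2 β h n n) * yseq (n + 1)
              = (((1 - α) / M) * f (((n : ℝ) + 1) * h) (yp (n + 1))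
                  + y₀ * Real.exp (-β * (((n : ℝ) + 1) * h)))
                + β * ((∑ j ∈ Finset.range n,
                    (linB1 β h n j * yseq j + linB2 β h n j * yseq (j + 1)))
                  + linB1 β h n n * yseq n)) →
          ∀ n, 1 ≤ n → n ≤ N →
            |y (((n : ℝ) + 1) * h) - yp (n + 1)|
              ≤ (2 * L * (1 - α) / M)
                  * (|y ((↑(n - 1) : ℝ) * h) - yseq (n - 1)|
                    + 2 * |y ((n : ℝ) * h) - yseq n|)
                + 4 * β * h * (∑ j ∈ Finset.Icc 1 n, |y ((j : ℝ) * h) - yseq j|)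
                + C * h ^ 2 := by
  obtain ⟨hα0, hα1⟩ := hα
  have hβ0 : 0 < β := by rw [hβ]; exact div_pos hα0 (by linarith)
  obtain ⟨K, hK0, y', hK⟩ := aux_taylor T hT y hy
  obtain ⟨K₂, hK₂0, F', hK₂⟩ := aux_taylor T hT _ hfy
  have hc0 : 0 ≤ (1 - α) / M := div_nonneg (by linarith) hM.le
  refine ⟨1 / β, by positivity, 2 * (((1 - α) / M) * (2 * K₂) + β * (2 * K * T)), ?_⟩
  intro N h hh hh0 yseq yp hs0 hsch n hn1 hnN
  have hhpos : 0 < h := by rw [hh]; positivity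
  have hpred := (hsch n hn1 hnN).1
  have hNT : ((N : ℝ) + 1) * h = T := by rw [hh]; field_simp
  have hnN' : (n : ℝ) ≤ N := by exact_mod_cast hnN
  have htT : ((n : ℝ) + 1) * h ≤ T := by rw [← hNT]; gcongr
  have hn1' : (1 : ℝ) ≤ n := by exact_mod_cast hn1
  have hcast : ((n - 1 : ℕ) : ℝ) = (n : ℝ) - 1 := by push_cast [Nat.cast_sub hn1]; ring
  have hm1 : ((n - 1 : ℕ) : ℝ) * h ∈ Set.Icc (0 : ℝ) T := by
    rw [hcast]; constructor <;> nlinarith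
  have hm2 : (n : ℝ) * h ∈ Set.Icc (0 : ℝ) T := by constructor <;> nlinarith
  have hm3 : ((n : ℝ) + 1) * h ∈ Set.Icc (0 : ℝ) T := ⟨by positivity, htT⟩
  have hI := hint _ hm3
  -- second difference
  have f1 := hK₂ _ hm2 _ hm3
  have f2 := hK₂ _ hm2 _ hm1
  rw [show ((n : ℝ) + 1) * h - n * h = h by ring] at f1
  rw [show ((n - 1 : ℕ) : ℝ) * h - n * h = -h by rw [hcast]; ring, neg_sq] at f2
  have l1 := hf _ hm1 (y (((n - 1 : ℕ) : ℝ) * h)) (yseq (n - 1))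
  have l2 := hf _ hm2 (y ((n : ℝ) * h)) (yseq n)
  -- quadrature
  have hyc := hy.continuousOn
  have hsplit : (∫ s in (0 : ℝ)..(((n : ℝ) + 1) * h),
        y s * Real.exp (-β * (((n : ℝ) + 1) * h - s)))
      = ∑ j ∈ Finset.range (n + 1), ∫ s in ((j : ℝ) * h)..(((j : ℝ) + 1) * h),
        y s * Real.exp (-β * (((n : ℝ) + 1) * h - s)) := by
    have := intervalIntegral.sum_integral_adjacent_intervals (μ := volume)
      (f := fun s => y s * Real.exp (-β * (((n : ℝ) + 1) * h - s)))
      (a := fun j : ℕ => (j : ℝ) * h) (n := n + 1) ?_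
    · simp only [Nat.cast_add, Nat.cast_one, Nat.cast_zero, zero_mul] at this
      exact this.symm
    · intro k hk
      have hk' : (k : ℝ) ≤ n := by exact_mod_cast Nat.lt_succ_iff.1 hk
      apply ContinuousOn.intervalIntegrable
      refine (hyc.mono ?_).mul (by fun_prop)
      apply Set.uIcc_subset_Icc
      · constructor
        · positivity
        · nlinarith
      · push_cast
        constructor
        · positivity
        · nlinarith
  have hquad : |(∫ s in (0 : ℝ)..(((n : ℝ) + 1) * h),
        y s * Real.exp (-β * (((n : ℝ) + 1) * h - s)))
      - ∑ j ∈ Finset.range (n + 1), (linB1 β h n j * y (j * h)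
        + linB2 β h n j * y (((j : ℝ) + 1) * h))| ≤ 2 * K * T * h ^ 2 := by
    rw [hsplit, ← Finset.sum_sub_distrib]
    refine (Finset.abs_sum_le_sum_abs _ _).trans ?_
    refine (Finset.sum_le_sum (g := fun _ => 2 * K * h ^ 2 * h) fun j hj =>
      aux_cell T β h K hβ0.le hhpos n j
      (Nat.lt_succ_iff.1 (Finset.mem_range.1 hj)) htT y y' hyc hK0 hK).trans ?_
    rw [Finset.sum_const, Finset.card_range, nsmul_eq_mul]
    push_cast
    calc _ = (2 * K * h ^ 2) * (((n : ℝ) + 1) * h) := by ring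
      _ ≤ (2 * K * h ^ 2) * T := by gcongr
      _ = _ := by ring
  -- propagated errors
  have herr : |(∑ j ∈ Finset.range n, (linB1 β h n j * (y (j * h) - yseq j)
        + linB2 β h n j * (y (((j : ℝ) + 1) * h) - yseq (j + 1))))
      + linB1 β h n n * (y (n * h) - yseq n)|
      ≤ h * ∑ j ∈ Finset.Icc 1 n, |y ((j : ℝ) * h) - yseq j| := by
    have hsum := aux_sum (fun j => |y ((j : ℝ) * h) - yseq j|) (by simp [hs0, hy0]) n
    have hb : ∀ j ≤ n, |linB1 β h n j * (y (j * h) - yseq j)|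
        ≤ h / 2 * |y ((j : ℝ) * h) - yseq j| := by
      intro j hj
      rw [abs_mul]
      exact mul_le_mul_of_nonneg_right (aux_weight β h hβ0.le hhpos n j hj).1 (abs_nonneg _)
    calc _ ≤ (∑ j ∈ Finset.range n, (h / 2) * (|y ((j : ℝ) * h) - yseq j|
          + |y (((j + 1 : ℕ) : ℝ) * h) - yseq (j + 1)|)) + h / 2 * |y ((n : ℝ) * h) - yseq n| := by
          refine (abs_add_le _ _).trans (add_le_add ?_ (hb n le_rfl))
          refine (Finset.abs_sum_le_sum_abs _ _).trans (Finset.sum_le_sum fun j hj => ?_)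
          have hj' := (Finset.mem_range.1 hj).le
          refine (abs_add_le _ _).trans ?_
          rw [mul_add]
          refine add_le_add (hb j hj') ?_
          push_cast
          rw [abs_mul]
          exact mul_le_mul_of_nonneg_right (aux_weight β h hβ0.le hhpos n j hj').2 (abs_nonneg _)
      _ = h / 2 * ((∑ j ∈ Finset.range n, (|y ((j : ℝ) * h) - yseq j|
          + |y (((j + 1 : ℕ) : ℝ) * h) - yseq (j + 1)|)) + |y ((n : ℝ) * h) - yseq n|) := by
          rw [← Finset.mul_sum]; ring
      _ = h / 2 * (2 * ∑ j ∈ Finset.Icc 1 n, |y ((j : ℝ) * h) - yseq j|) := by rw [← hsum]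
      _ = _ := by ring
  have hsumsplit : (∑ j ∈ Finset.range n, (linB1 β h n j * (y (j * h) - yseq j)
        + linB2 β h n j * (y (((j : ℝ) + 1) * h) - yseq (j + 1))))
      = (∑ j ∈ Finset.range n, (linB1 β h n j * y (j * h)
        + linB2 β h n j * y (((j : ℝ) + 1) * h)))
        - ∑ j ∈ Finset.range n, (linB1 β h n j * yseq j + linB2 β h n j * yseq (j + 1)) := by
    rw [← Finset.sum_sub_distrib]
    exact Finset.sum_congr rfl fun j _ => by ring
  rw [hsumsplit] at herr
  rw [Finset.sum_range_succ] at hquad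
  have hB2 := (aux_weight β h hβ0.le hhpos n n le_rfl).2
  have hD : 1 / 2 ≤ 1 - β * linB2 β h n n := by
    have h1 : β * linB2 β h n n ≤ β * (h / 2) :=
      mul_le_mul_of_nonneg_left ((le_abs_self _).trans hB2) hβ0.le
    have h2 : β * h ≤ 1 := by
      rw [le_div_iff₀ hβ0] at hh0; linarith
    linarith
  set I := ∫ s in (0 : ℝ)..(((n : ℝ) + 1) * h), y s * Real.exp (-β * (((n : ℝ) + 1) * h - s))
  set S := ∑ j ∈ Finset.range n, (linB1 β h n j * y (j * h)
        + linB2 β h n j * y (((j : ℝ) + 1) * h))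
  set S' := ∑ j ∈ Finset.range n, (linB1 β h n j * yseq j + linB2 β h n j * yseq (j + 1))
  set ES := ∑ j ∈ Finset.Icc 1 n, |y ((j : ℝ) * h) - yseq j|
  set Y := y (((n : ℝ) + 1) * h)
  set c := (1 - α) / M with hc
  set E1 := |y (((n - 1 : ℕ) : ℝ) * h) - yseq (n - 1)|
  set E2 := |y ((n : ℝ) * h) - yseq n|
  set A := f (((n : ℝ) + 1) * h) Y - (-(f (((n - 1 : ℕ) : ℝ) * h) (yseq (n - 1)))
                    + 2 * f ((n : ℝ) * h) (yseq n)) with hA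
  set Q := I - (S + (linB1 β h n n * y (n * h) + linB2 β h n n * Y)) with hQ
  set P := S - S' + linB1 β h n n * (y (n * h) - yseq n) with hP
  have hmain : (1 - β * linB2 β h n n) * (Y - yp (n + 1)) = c * A + β * Q + β * P := by
    rw [mul_sub, hpred, hA, hQ, hP]
    linear_combination hI
  have hAb : |A| ≤ L * (E1 + 2 * E2) + 2 * K₂ * h ^ 2 := by
    rw [abs_le] at f1 f2 l1 l2 ⊢
    constructor <;> linarith [f1.1, f1.2, f2.1, f2.2, l1.1, l1.2, l2.1, l2.2]
  have hR : |c * A + β * Q + β * P| ≤ c * (L * (E1 + 2 * E2) + 2 * K₂ * h ^ 2)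
      + β * (2 * K * T * h ^ 2) + β * (h * ES) := by
    refine (abs_add_three _ _ _).trans ?_
    rw [abs_mul, abs_mul, abs_mul, abs_of_nonneg hc0, abs_of_pos hβ0]
    exact add_le_add (add_le_add (mul_le_mul_of_nonneg_left hAb hc0)
      (mul_le_mul_of_nonneg_left hquad hβ0.le)) (mul_le_mul_of_nonneg_left herr hβ0.le)
  rw [← hmain, abs_mul, abs_of_pos (by linarith)] at hR
  have hlow : 1 / 2 * |Y - yp (n + 1)| ≤ (1 - β * linB2 β h n n) * |Y - yp (n + 1)| :=
    mul_le_mul_of_nonneg_right hD (abs_nonneg _)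
  have hES : 0 ≤ β * (h * ES) := by
    have : 0 ≤ ES := Finset.sum_nonneg fun _ _ => abs_nonneg _
    positivity
  have hcL : 2 * L * (1 - α) / M = 2 * L * c := by rw [hc]; ring
  rw [hcL]
  linarith
end

section
/- Let β > 0, h > 0, t_j = jh, and define A²ₙ₊₁ⁿ = ∫_{t_n}^{t_{n+1}} ((s − t_{n−1})(s − t_n)/(2h²)) exp(−β(t_{n+1} − s)) ds. There exists an absolute constant C > 0 such that whenever 0 < βh ≤ 1, |(1 − β A²ₙ₊₁ⁿ) − (1 − (5/12) βh + (1/8) β²h²)| ≤ C (βh)³. -/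
open Real MeasureTheory

lemma aux_poly (x : ℝ) : ∫ v in (0:ℝ)..1, ((v + 1) * v / 2) * (1 - x * (1 - v)) = 5 / 12 - x / 8 := by
  have h : ∀ v ∈ Set.uIcc (0:ℝ) 1, HasDerivAt
      (fun v : ℝ => (1 - x) * (v ^ 3 / 6 + v ^ 2 / 4) + x * (v ^ 4 / 8 + v ^ 3 / 6))
      (((v + 1) * v / 2) * (1 - x * (1 - v))) v := by
    intro v _
    have h2 := hasDerivAt_pow 2 v
    have h3 := hasDerivAt_pow 3 v
    have h4 := hasDerivAt_pow 4 v
    refine ((((h3.div_const 6).add (h2.div_const 4)).const_mul (1 - x)).add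
      (((h4.div_const 8).add (h3.div_const 6)).const_mul x)).congr_deriv ?_
    push_cast
    ring
  rw [intervalIntegral.integral_eq_sub_of_hasDerivAt h
    (Continuous.intervalIntegrable (by fun_prop) _ _)]
  ring

lemma aux_bound (x : ℝ) (hx : 0 < x) (hx1 : x ≤ 1) :
    |(∫ v in (0:ℝ)..1, ((v + 1) * v / 2) * Real.exp (-x * (1 - v))) - (5 / 12 - x / 8)| ≤ x ^ 2 := by
  rw [← aux_poly, ← intervalIntegral.integral_sub
    (Continuous.intervalIntegrable (by fun_prop) _ _)
    (Continuous.intervalIntegrable (by fun_prop) _ _)]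
  have := intervalIntegral.norm_integral_le_of_norm_le_const (a := (0:ℝ)) (b := 1) (C := x ^ 2)
    (f := fun v => ((v + 1) * v / 2) * Real.exp (-x * (1 - v))
      - ((v + 1) * v / 2) * (1 - x * (1 - v))) ?_
  · simpa using this
  intro v hv
  rw [Set.uIoc_of_le zero_le_one] at hv
  obtain ⟨h0, h1⟩ := hv
  have hy0 : 0 ≤ x * (1 - v) := mul_nonneg hx.le (by linarith)
  have hyx : x * (1 - v) ≤ x := by nlinarith
  have he := Real.abs_exp_sub_one_sub_id_le (x := -x * (1 - v))
    (by rw [abs_le]; constructor <;> linarith)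
  have e1 : ((v + 1) * v / 2) * Real.exp (-x * (1 - v)) - ((v + 1) * v / 2) * (1 - x * (1 - v))
    = ((v + 1) * v / 2) * (Real.exp (-x * (1 - v)) - 1 - (-x * (1 - v))) := by ring
  have hq0 : 0 ≤ (v + 1) * v / 2 := by positivity
  have hq1 : (v + 1) * v / 2 ≤ 1 := by nlinarith
  rw [e1, Real.norm_eq_abs, abs_mul, abs_of_nonneg hq0]
  have h3 : (-x * (1 - v)) ^ 2 ≤ x ^ 2 := by nlinarith
  calc _ ≤ 1 * |Real.exp (-x * (1 - v)) - 1 - (-x * (1 - v))| :=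
        mul_le_mul_of_nonneg_right hq1 (abs_nonneg _)
    _ ≤ x ^ 2 := by linarith

/-- Expansion of the diagonal weight of the quadratic-interpolation scheme:
`1 - β A²ₙ₊₁ⁿ = 1 - (5/12)βh + (1/8)β²h² + O((βh)³)` uniformly for `0 < βh ≤ 1`. -/
theorem quadratic_scheme_diagonal_weight_expansion :
    ∃ C > (0 : ℝ), ∀ β h : ℝ, 0 < β → 0 < h → β * h ≤ 1 → ∀ n : ℕ, 1 ≤ n →
      |(1 - β * ∫ s in ((n : ℝ) * h)..(((n : ℝ) + 1) * h),
            ((s - ((n : ℝ) - 1) * h) * (s - (n : ℝ) * h) / (2 * h ^ 2))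
              * Real.exp (-β * (((n : ℝ) + 1) * h - s)))
          - (1 - 5 / 12 * β * h + 1 / 8 * β ^ 2 * h ^ 2)| ≤ C * (β * h) ^ 3 := by
  refine ⟨1, one_pos, fun β h hβ hh hx n _ => ?_⟩
  have hx0 : 0 < β * h := mul_pos hβ hh
  have hb := aux_bound (β * h) hx0 hx
  have key : ∫ s in ((n : ℝ) * h)..(((n : ℝ) + 1) * h),
            ((s - ((n : ℝ) - 1) * h) * (s - (n : ℝ) * h) / (2 * h ^ 2))
              * Real.exp (-β * (((n : ℝ) + 1) * h - s))
      = h * ∫ v in (0:ℝ)..1, ((v + 1) * v / 2) * Real.exp (-(β * h) * (1 - v)) := by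
    have := intervalIntegral.mul_integral_comp_mul_add (a := (0:ℝ)) (b := 1)
      (f := fun s => ((s - ((n : ℝ) - 1) * h) * (s - (n : ℝ) * h) / (2 * h ^ 2))
              * Real.exp (-β * (((n : ℝ) + 1) * h - s))) h ((n : ℝ) * h)
    rw [show h * 0 + (n : ℝ) * h = n * h by ring,
      show h * 1 + (n : ℝ) * h = (n + 1) * h by ring] at this
    rw [← this]
    congr 1
    apply intervalIntegral.integral_congr
    intro v _
    have e2 : -β * (((n : ℝ) + 1) * h - (h * v + n * h)) = -(β * h) * (1 - v) := by ring
    simp only [e2]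
    congr 1
    field_simp
    ring
  rw [key]
  generalize (∫ v in (0:ℝ)..1, ((v + 1) * v / 2) * Real.exp (-(β * h) * (1 - v))) = I at *
  rw [show 1 - β * (h * I) - (1 - 5 / 12 * β * h + 1 / 8 * β ^ 2 * h ^ 2)
    = -((β * h) * (I - (5 / 12 - β * h / 8))) by ring, abs_neg, abs_mul, abs_of_pos hx0]
  calc _ ≤ (β * h) * (β * h) ^ 2 := mul_le_mul_of_nonneg_left hb hx0.le
    _ = _ := by ring
end

section
/- Let β > 0, T > 0, h = T/(N+1), t_j = jh, and let y : [0,T] → ℝ be three times continuously differentiable. For j ≥ 1 let L²_j y be the quadratic Lagrange interpolant of y at t_{j−1}, t_j, t_{j+1}, and let L²₀ y be the quadratic Lagrange interpolant of y at t₀, t_{1/2} := h/2, and t₁. Then for every 1 ≤ n ≤ N the truncation error Tₙ₊₁ = β Σ_{j=0}^{n} ∫_{t_j}^{t_{j+1}} (y(s) − L²_j y(s)) exp(−β(t_{n+1}−s)) ds satisfies |Tₙ₊₁| ≤ (‖y‴‖_∞ / 12) (1 − exp(−β t_{n+1})) h³, where ‖y‴‖_∞ = sup_{t∈[0,T]}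 |y‴(t)|. -/
open Real MeasureTheory Finset

/-- The quadratic Lagrange interpolant at nodes `a, b, c` with values `ya, yb, yc`. -/
noncomputable def lagInterp2 (a b c ya yb yc s : ℝ) : ℝ :=
  ya * ((s - b) * (s - c)) / ((a - b) * (a - c))
    + yb * ((s - a) * (s - c)) / ((b - a) * (b - c))
    + yc * ((s - a) * (s - b)) / ((c - a) * (c - b))


theorem rolle_three {l r : ℝ} {f f1 f2 f3 : ℝ → ℝ} (hc : ContinuousOn f (Set.Icc l r))
    (h1 : ∀ x ∈ Set.Ioo l r, HasDerivAt f (f1 x) x)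
    (h2 : ∀ x ∈ Set.Ioo l r, HasDerivAt f1 (f2 x) x)
    (h3 : ∀ x ∈ Set.Ioo l r, HasDerivAt f2 (f3 x) x)
    {a b c d : ℝ} (hla : l ≤ a) (hab : a < b) (hbc : b < c) (hcd : c < d) (hdr : d ≤ r)
    (fa : f a = 0) (fb : f b = 0) (fc : f c = 0) (fd : f d = 0) :
    ∃ x ∈ Set.Ioo l r, f3 x = 0 := by
  have R0 : ∀ u v, l ≤ u → u < v → v ≤ r → f u = 0 → f v = 0 →
      ∃ x ∈ Set.Ioo u v, f1 x = 0 := by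
    intro u v hu huv hv fu fv
    exact exists_hasDerivAt_eq_zero huv (hc.mono (Set.Icc_subset_Icc hu hv)) (by rw [fu, fv])
      (fun x hx => h1 x ⟨by linarith [hx.1], by linarith [hx.2]⟩)
  have R1 : ∀ g g' : ℝ → ℝ, (∀ x ∈ Set.Ioo l r, HasDerivAt g (g' x) x) →
      ∀ u v, l < u → u < v → v < r → g u = 0 → g v = 0 → ∃ x ∈ Set.Ioo u v, g' x = 0 := by
    intro g g' hg u v hu huv hv fu fv
    exact exists_hasDerivAt_eq_zero huv
      (fun x hx => (hg x ⟨by linarith [hx.1], by linarith [hx.2]⟩).continuousAt.continuousWithinAt)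
      (by rw [fu, fv])
      (fun x hx => hg x ⟨by linarith [hx.1], by linarith [hx.2]⟩)
  obtain ⟨p, ⟨hp1, hp2⟩, hp⟩ := R0 a b hla hab (by linarith) fa fb
  obtain ⟨q, ⟨hq1, hq2⟩, hq⟩ := R0 b c (by linarith) hbc (by linarith) fb fc
  obtain ⟨w, ⟨hw1, hw2⟩, hw⟩ := R0 c d (by linarith) hcd hdr fc fd
  obtain ⟨u, ⟨hu1, hu2⟩, hu⟩ := R1 f1 f2 h2 p q (by linarith) (by linarith) (by linarith) hp hq
  obtain ⟨v, ⟨hv1, hv2⟩, hv⟩ := R1 f1 f2 h2 q w (by linarith) (by linarith) (by linarith) hq hw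
  obtain ⟨x, ⟨hx1, hx2⟩, hx⟩ := R1 f2 f3 h3 u v (by linarith) (by linarith) (by linarith) hu hv
  exact ⟨x, ⟨by linarith, by linarith⟩, hx⟩

theorem lagInterp2_poly (a b c ya yb yc : ℝ) :
    ∃ A B C : ℝ, ∀ s, lagInterp2 a b c ya yb yc s = A + B * s + C * s ^ 2 := by
  refine ⟨ya * (b * c) / ((a - b) * (a - c)) + yb * (a * c) / ((b - a) * (b - c))
      + yc * (a * b) / ((c - a) * (c - b)),
    - (ya * (b + c) / ((a - b) * (a - c)) + yb * (a + c) / ((b - a) * (b - c))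
      + yc * (a + b) / ((c - a) * (c - b))),
    ya / ((a - b) * (a - c)) + yb / ((b - a) * (b - c)) + yc / ((c - a) * (c - b)), ?_⟩
  intro s
  unfold lagInterp2
  ring

theorem lagInterp2_nodes {a b c : ℝ} (hab : a < b) (hbc : b < c) (ya yb yc : ℝ) :
    lagInterp2 a b c ya yb yc a = ya ∧ lagInterp2 a b c ya yb yc b = yb ∧
      lagInterp2 a b c ya yb yc c = yc := by
  have h1 : a - b ≠ 0 := by linarith
  have h2 : a - c ≠ 0 := by linarith
  have h3 : b - a ≠ 0 := by linarith
  have h4 : b - c ≠ 0 := by linarith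
  have h5 : c - a ≠ 0 := by linarith
  have h6 : c - b ≠ 0 := by linarith
  unfold lagInterp2
  refine ⟨?_, ?_, ?_⟩ <;> field_simp <;> ring

theorem interp_error {l r M : ℝ} {f f1 f2 f3 : ℝ → ℝ} (hc : ContinuousOn f (Set.Icc l r))
    (h1 : ∀ x ∈ Set.Ioo l r, HasDerivAt f (f1 x) x)
    (h2 : ∀ x ∈ Set.Ioo l r, HasDerivAt f1 (f2 x) x)
    (h3 : ∀ x ∈ Set.Ioo l r, HasDerivAt f2 (f3 x) x)
    (hM : ∀ x ∈ Set.Ioo l r, |f3 x| ≤ M)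
    {a b c s : ℝ} (hla : l ≤ a) (hab : a < b) (hbc : b < c) (hcr : c ≤ r)
    (has : a ≤ s) (hsc : s ≤ c) :
    |f s - lagInterp2 a b c (f a) (f b) (f c) s| ≤ M / 6 * |(s - a) * (s - b) * (s - c)| := by
  obtain ⟨na, nb, nc⟩ := lagInterp2_nodes hab hbc (f a) (f b) (f c)
  rcases has.eq_or_lt with rfl | has
  · rw [na]; simp
  rcases hsc.eq_or_lt with rfl | hsc
  · rw [nc]; simp
  by_cases hsb : s = b
  · subst hsb; rw [nb]; simp
  obtain ⟨A, B, C, hL⟩ := lagInterp2_poly a b c (f a) (f b) (f c)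
  have hw : (s - a) * (s - b) * (s - c) ≠ 0 :=
    mul_ne_zero (mul_ne_zero (by linarith) (sub_ne_zero.2 hsb)) (by linarith)
  obtain ⟨K, hK⟩ : ∃ K, f s - lagInterp2 a b c (f a) (f b) (f c) s
      = K * ((s - a) * (s - b) * (s - c)) := ⟨_, (div_mul_cancel₀ _ hw).symm⟩
  rw [hL] at na nb nc hK
  have key : ∃ x ∈ Set.Ioo l r, f3 x - 6 * K = 0 := by
    let g : ℝ → ℝ := fun x => f x - (A + B * x + C * x ^ 2 + K * ((x - a) * (x - b) * (x - c)))
    let g1 : ℝ → ℝ := fun x => f1 x - (B + 2 * C * x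
      + K * (3 * x ^ 2 - 2 * (a + b + c) * x + (a * b + b * c + a * c)))
    let g2 : ℝ → ℝ := fun x => f2 x - (2 * C + K * (6 * x - 2 * (a + b + c)))
    have gc : ContinuousOn g (Set.Icc l r) := hc.sub (by fun_prop)
    have g1' : ∀ x ∈ Set.Ioo l r, HasDerivAt g (g1 x) x := by
      intro x hx
      have e : HasDerivAt (fun x : ℝ => A + B * x + C * x ^ 2 + K * ((x - a) * (x - b) * (x - c)))
          _ x := (((hasDerivAt_id x).const_mul B).const_add A |>.add
            (((hasDerivAt_id x).pow 2).const_mul C)).add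
            (((((hasDerivAt_id x).sub_const a).mul ((hasDerivAt_id x).sub_const b)).mul
              ((hasDerivAt_id x).sub_const c)).const_mul K)
      refine ((h1 x hx).sub e).congr_deriv ?_
      simp [g1]; ring
    have g2' : ∀ x ∈ Set.Ioo l r, HasDerivAt g1 (g2 x) x := by
      intro x hx
      have e : HasDerivAt (fun x : ℝ => B + 2 * C * x
          + K * (3 * x ^ 2 - 2 * (a + b + c) * x + (a * b + b * c + a * c)))
          _ x := (((hasDerivAt_id x).const_mul (2 * C)).const_add B).add
            ((((((hasDerivAt_id x).pow 2).const_mul 3).sub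
              ((hasDerivAt_id x).const_mul (2 * (a + b + c)))).add_const
                (a * b + b * c + a * c)).const_mul K)
      refine ((h2 x hx).sub e).congr_deriv ?_
      simp [g2]; ring_nf; simp
    have g3' : ∀ x ∈ Set.Ioo l r, HasDerivAt g2 (f3 x - 6 * K) x := by
      intro x hx
      have e : HasDerivAt (fun x : ℝ => 2 * C + K * (6 * x - 2 * (a + b + c)))
          _ x := ((((hasDerivAt_id x).const_mul 6).sub_const
            (2 * (a + b + c))).const_mul K).const_add (2 * C)
      refine ((h3 x hx).sub e).congr_deriv ?_
      ring
    have ga : g a = 0 := by simp only [g]; linear_combination -na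
    have gb : g b = 0 := by simp only [g]; linear_combination -nb
    have gc0 : g c = 0 := by simp only [g]; linear_combination -nc
    have gs : g s = 0 := by simp only [g]; linear_combination hK
    rcases lt_or_gt_of_ne hsb with hlt | hgt
    · exact rolle_three gc g1' g2' g3' hla has hlt hbc hcr ga gs gb gc0
    · exact rolle_three gc g1' g2' g3' hla hab hgt hsc hcr ga gb gs gc0
  obtain ⟨x, hx, hx0⟩ := key
  rw [hL, hK, abs_mul]
  refine mul_le_mul_of_nonneg_right ?_ (abs_nonneg _)
  have := hM x hx
  rw [show f3 x = 6 * K by linarith, abs_mul, abs_of_pos (by norm_num : (0:ℝ) < 6)] at this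
  linarith

theorem lagInterp2_continuous (a b c ya yb yc : ℝ) :
    Continuous (lagInterp2 a b c ya yb yc) := by
  unfold lagInterp2
  fun_prop

theorem exp_integral (β t a b : ℝ) (hβ : 0 < β) :
    ∫ s in a..b, Real.exp (-β * (t - s)) =
      (Real.exp (-β * (t - b)) - Real.exp (-β * (t - a))) / β := by
  have : ∀ x ∈ Set.uIcc a b, HasDerivAt (fun s => Real.exp (-β * (t - s)) / β)
      (Real.exp (-β * (t - x))) x := by
    intro x _
    have e := ((((hasDerivAt_id x).const_sub t).const_mul (-β)).exp).div_const β
    refine e.congr_deriv ?_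
    simp
    field_simp
  rw [intervalIntegral.integral_eq_sub_of_hasDerivAt this
    (Continuous.intervalIntegrable (by fun_prop) _ _)]
  ring

/-- Truncation error of the quadratic-interpolation quadrature (with half node `h/2` on
the first interval): `|Tₙ₊₁| ≤ (‖y‴‖_∞/12) (1 - exp(-β tₙ₊₁)) h³`. -/
theorem quadratic_truncation_error
    (β T : ℝ) (N : ℕ) (h : ℝ) (hβ : 0 < β) (hT : 0 < T) (hh : h = T / (N + 1))
    (y : ℝ → ℝ) (hy : ContDiffOn ℝ 3 y (Set.Icc 0 T)) :
    ∀ n, 1 ≤ n → n ≤ N →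
      |β * ∑ j ∈ Finset.range (n + 1),
          ∫ s in ((j : ℝ) * h)..(((j : ℝ) + 1) * h),
            (y s -
              (if j = 0 then lagInterp2 0 (h / 2) h (y 0) (y (h / 2)) (y h) s
               else lagInterp2 (((j : ℝ) - 1) * h) ((j : ℝ) * h) (((j : ℝ) + 1) * h)
                  (y (((j : ℝ) - 1) * h)) (y ((j : ℝ) * h)) (y (((j : ℝ) + 1) * h)) s))
              * Real.exp (-β * (((n : ℝ) + 1) * h - s))|
        ≤ (sSup ((fun t => |iteratedDerivWithin 3 y (Set.Icc (0 : ℝ) T) t|) ''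
              Set.Icc (0 : ℝ) T) / 12)
            * (1 - Real.exp (-β * (((n : ℝ) + 1) * h))) * h ^ 3 := by
  intro n _ hnN
  set M := sSup ((fun t => |iteratedDerivWithin 3 y (Set.Icc (0 : ℝ) T) t|) '' Set.Icc (0 : ℝ) T)
    with hMdef
  have hu : UniqueDiffOn ℝ (Set.Icc (0:ℝ) T) := uniqueDiffOn_Icc hT
  have hN : (0:ℝ) < N + 1 := by positivity
  have hpos : 0 < h := by rw [hh]; positivity
  have hTh : T = (N + 1) * h := by rw [hh]; field_simp
  have hyc : ContinuousOn y (Set.Icc 0 T) := hy.continuousOn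
  have hM : ∀ x ∈ Set.Icc (0:ℝ) T, |iteratedDerivWithin 3 y (Set.Icc (0 : ℝ) T) x| ≤ M := by
    intro x hx
    refine le_csSup ?_ ⟨x, hx, rfl⟩
    exact (isCompact_Icc.image_of_continuousOn
      (hy.continuousOn_iteratedDerivWithin (m := 3) le_rfl hu).abs).bddAbove
  have hM0 : 0 ≤ M := (abs_nonneg _).trans (hM 0 ⟨le_rfl, hT.le⟩)
  have hD : ∀ k : ℕ, k < 3 → ∀ x ∈ Set.Ioo (0:ℝ) T,
      HasDerivAt (iteratedDerivWithin k y (Set.Icc (0:ℝ) T))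
        (iteratedDerivWithin (k + 1) y (Set.Icc (0:ℝ) T) x) x := by
    intro k hk x hx
    have hd := hy.differentiableOn_iteratedDerivWithin (m := k) (by exact_mod_cast hk) hu x
      (Set.Ioo_subset_Icc_self hx)
    rw [iteratedDerivWithin_succ]
    exact hd.hasDerivWithinAt.hasDerivAt (Icc_mem_nhds hx.1 hx.2)
  have hD0 : ∀ x ∈ Set.Ioo (0:ℝ) T,
      HasDerivAt y (iteratedDerivWithin 1 y (Set.Icc (0:ℝ) T) x) x := by
    intro x hx
    have := hD 0 (by norm_num) x hx
    rwa [iteratedDerivWithin_zero] at this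
  have hE := fun {a b c s : ℝ} => interp_error (a := a) (b := b) (c := c) (s := s) hyc hD0
    (hD 1 (by norm_num)) (hD 2 (by norm_num))
    (fun x hx => hM x (Set.Ioo_subset_Icc_self hx))
  have hjT : ∀ j ∈ Finset.range (n + 1), ((j:ℝ) + 1) * h ≤ T := by
    intro j hj
    rw [hTh]
    have : j ≤ N := by have := Finset.mem_range.1 hj; omega
    have : (j:ℝ) ≤ N := by exact_mod_cast this
    nlinarith
  have hterm : ∀ j ∈ Finset.range (n + 1),
      |∫ s in ((j : ℝ) * h)..(((j : ℝ) + 1) * h),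
            (y s -
              (if j = 0 then lagInterp2 0 (h / 2) h (y 0) (y (h / 2)) (y h) s
               else lagInterp2 (((j : ℝ) - 1) * h) ((j : ℝ) * h) (((j : ℝ) + 1) * h)
                  (y (((j : ℝ) - 1) * h)) (y ((j : ℝ) * h)) (y (((j : ℝ) + 1) * h)) s))
              * Real.exp (-β * (((n : ℝ) + 1) * h - s))|
        ≤ M / 12 * h ^ 3 * ((Real.exp (-β * (((n : ℝ) + 1) * h - ((j + 1 : ℕ) : ℝ) * h))
            - Real.exp (-β * (((n : ℝ) + 1) * h - (j : ℝ) * h))) / β) := by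
    intro j hj
    have hj1 := hjT j hj
    push_cast
    rw [← exp_integral β _ _ _ hβ, ← intervalIntegral.integral_const_mul, ← Real.norm_eq_abs]
    refine intervalIntegral.norm_integral_le_of_norm_le (by nlinarith) ?_
      (Continuous.intervalIntegrable (by fun_prop) _ _)
    refine Filter.Eventually.of_forall fun s hs => ?_
    obtain ⟨hs1, hs2⟩ := hs
    rw [norm_mul, Real.norm_eq_abs, Real.norm_eq_abs, Real.abs_exp]
    refine mul_le_mul_of_nonneg_right ?_ (Real.exp_pos _).le
    have fin : ∀ w : ℝ, |w| ≤ h ^ 3 / 2 → M / 6 * |w| ≤ M / 12 * h ^ 3 := by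
      intro w hw
      have := mul_le_mul_of_nonneg_left hw (by positivity : 0 ≤ M / 6)
      linarith
    split_ifs with h0
    · subst h0
      simp only [Nat.cast_zero, zero_mul, zero_add, one_mul] at hs1 hs2 hj1
      refine (hE le_rfl (by linarith) (by linarith) hj1 hs1.le hs2).trans (fin _ ?_)
      have e1 : |s - 0| ≤ h := abs_le.2 ⟨by linarith, by linarith⟩
      have e2 : |s - h / 2| ≤ h / 2 := abs_le.2 ⟨by linarith, by linarith⟩
      have e3 : |s - h| ≤ h := abs_le.2 ⟨by linarith, by linarith⟩
      rw [abs_mul, abs_mul]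
      calc _ ≤ h * (h / 2) * h := by gcongr
        _ = _ := by ring
    · have hj0 : (1:ℝ) ≤ j := by exact_mod_cast Nat.one_le_iff_ne_zero.2 h0
      refine (hE (by nlinarith) (by nlinarith) (by nlinarith) hj1 (by nlinarith) hs2).trans
        (fin _ ?_)
      obtain ⟨u, rfl⟩ : ∃ u, s = j * h + u := ⟨s - j * h, by ring⟩
      have hu0 : 0 < u := by linarith
      have hu1 : u ≤ h := by linarith
      rw [show (j * h + u - (j - 1) * h) * (j * h + u - j * h) * (j * h + u - (j + 1) * h)
        = -(u * (h ^ 2 - u ^ 2)) by ring, abs_neg, abs_of_nonneg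
          (mul_nonneg hu0.le (by nlinarith))]
      nlinarith [mul_nonneg (by linarith : 0 ≤ u + h) (sq_nonneg (2 * u - h)), pow_pos hpos 3,
        mul_pos (pow_pos hpos 2) hu0, mul_nonneg (by linarith : 0 ≤ u + h) (sq_nonneg (5 * u - 3 * h)), mul_nonneg hu0.le (sq_nonneg (5 * u - 3 * h)), mul_nonneg hpos.le (sq_nonneg (5 * u - 3 * h))]
  rw [abs_mul, abs_of_pos hβ]
  calc _ ≤ β * ∑ j ∈ Finset.range (n + 1),
        M / 12 * h ^ 3 * ((Real.exp (-β * (((n : ℝ) + 1) * h - ((j + 1 : ℕ) : ℝ) * h))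
            - Real.exp (-β * (((n : ℝ) + 1) * h - (j : ℝ) * h))) / β) :=
        mul_le_mul_of_nonneg_left ((Finset.abs_sum_le_sum_abs _ _).trans
          (Finset.sum_le_sum hterm)) hβ.le
    _ = _ := by
      rw [← Finset.mul_sum, ← Finset.sum_div,
        Finset.sum_range_sub (fun j : ℕ => Real.exp (-β * (((n : ℝ) + 1) * h - (j : ℝ) * h)))]
      push_cast
      simp only [sub_self, mul_zero, Real.exp_zero, zero_mul, sub_zero]
      field_simp
end

section
/- Let g : [0,T] → ℝ be three times continuously differentiable, h > 0, t₀ = 0, t_{1/2} = h/2, t₁ = h, t₂ = 2h ≤ T. Then |g(t₂) − (3 g(t₀) − 8 g(t_{1/2}) + 6 g(t₁))| ≤ (‖g‴‖_∞ / 2) h³, where ‖g‴‖_∞ = sup_{t∈[0,T]} |g‴(t)|. -/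
open Real

/-- Start-up extrapolation error: the quadratic Lagrange extrapolation of `g` at `t₂ = 2h`
from the nodes `0, h/2, h` satisfies `|g(2h) - (3g(0) - 8g(h/2) + 6g(h))| ≤ (‖g‴‖_∞/2) h³`. -/
theorem startup_extrapolation_error
    (T h : ℝ) (hT : 0 < T) (hh : 0 < h) (g : ℝ → ℝ)
    (hg : ContDiffOn ℝ 3 g (Set.Icc 0 T)) (h2T : 2 * h ≤ T) :
    |g (2 * h) - (3 * g 0 - 8 * g (h / 2) + 6 * g h)|
      ≤ (sSup ((fun t => |iteratedDerivWithin 3 g (Set.Icc (0 : ℝ) T) t|) ''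
          Set.Icc (0 : ℝ) T) / 2) * h ^ 3 := by
  have hu : UniqueDiffOn ℝ (Set.Icc (0 : ℝ) T) := uniqueDiffOn_Icc hT
  have hD : ∀ k : ℕ, k < 3 → ∀ x ∈ Set.Ioo (0 : ℝ) T,
      HasDerivAt (iteratedDerivWithin k g (Set.Icc (0 : ℝ) T))
        (iteratedDerivWithin (k + 1) g (Set.Icc (0 : ℝ) T) x) x := by
    intro k hk x hx
    have hd := hg.differentiableOn_iteratedDerivWithin (m := k) (by exact_mod_cast hk) hu
    have h1 := (hd x (Set.Ioo_subset_Icc_self hx)).hasDerivWithinAt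
    rw [← iteratedDerivWithin_succ] at h1
    exact h1.hasDerivAt (Icc_mem_nhds hx.1 hx.2)
  have hc3 : ContinuousOn (iteratedDerivWithin 3 g (Set.Icc (0 : ℝ) T)) (Set.Icc 0 T) :=
    hg.continuousOn_iteratedDerivWithin (by norm_num) hu
  have hbdd := (isCompact_Icc.image_of_continuousOn hc3.abs).bddAbove
  have h0 := hD 0 (by norm_num)
  have h1 := hD 1 (by norm_num)
  have h2 := hD 2 (by norm_num)
  rw [iteratedDerivWithin_zero] at h0
  norm_num only at h0 h1 h2
  have hgc := hg.continuousOn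
  generalize iteratedDerivWithin 3 g (Set.Icc (0 : ℝ) T) = g3 at *
  generalize iteratedDerivWithin 2 g (Set.Icc (0 : ℝ) T) = g2 at *
  generalize iteratedDerivWithin 1 g (Set.Icc (0 : ℝ) T) = g1 at *
  obtain ⟨E, hE⟩ : ∃ E, E = g (2 * h) - (3 * g 0 - 8 * g (h / 2) + 6 * g h) := ⟨_, rfl⟩
  obtain ⟨c, hc⟩ : ∃ c, c = E / (3 * h ^ 3) := ⟨_, rfl⟩
  obtain ⟨d, hd⟩ : ∃ d, d = (g h - 2 * g (h / 2) + g 0) / (h ^ 2 / 2) := ⟨_, rfl⟩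
  obtain ⟨b, hb⟩ : ∃ b, b = d - 3 * h / 2 * c := ⟨_, rfl⟩
  obtain ⟨a, ha⟩ : ∃ a, a = (g (h / 2) - g 0) / (h / 2) - d * h / 2 + c * h ^ 2 / 2 := ⟨_, rfl⟩
  have e0 : ∀ x ∈ Set.Ioo (0 : ℝ) T,
      HasDerivAt (fun t => g t - (a * t + b * t ^ 2 + c * t ^ 3))
        (g1 x - (a + b * (2 * x) + c * (3 * x ^ 2))) x := by
    intro x hx
    have := (h0 x hx).sub ((((hasDerivAt_id x).const_mul a).add
      ((hasDerivAt_pow 2 x).const_mul b)).add ((hasDerivAt_pow 3 x).const_mul c))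
    exact this.congr_deriv (by norm_num)
  have e1 : ∀ x ∈ Set.Ioo (0 : ℝ) T,
      HasDerivAt (fun x => g1 x - (a + b * (2 * x) + c * (3 * x ^ 2)))
        (g2 x - (b * 2 + c * (6 * x))) x := by
    intro x hx
    have := (h1 x hx).sub (((((hasDerivAt_id x).const_mul 2).const_mul b).const_add a).add
      (((hasDerivAt_pow 2 x).const_mul 3).const_mul c))
    exact this.congr_deriv (by push_cast; ring)
  have e2 : ∀ x ∈ Set.Ioo (0 : ℝ) T,
      HasDerivAt (fun x => g2 x - (b * 2 + c * (6 * x))) (g3 x - c * 6) x := by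
    intro x hx
    have := (h2 x hx).sub ((((hasDerivAt_id x).const_mul 6).const_mul c).const_add (b * 2))
    exact this.congr_deriv (by norm_num)
  have hFc : ContinuousOn (fun t => g t - (a * t + b * t ^ 2 + c * t ^ 3)) (Set.Icc 0 T) :=
    hgc.sub (by fun_prop)
  have v1 : g (h / 2) - (a * (h / 2) + b * (h / 2) ^ 2 + c * (h / 2) ^ 3) = g 0 := by
    rw [ha, hb, hd]; field_simp; ring
  have v2 : g h - (a * h + b * h ^ 2 + c * h ^ 3) = g 0 := by
    rw [ha, hb, hd]; field_simp; ring
  have v3 : g (2 * h) - (a * (2 * h) + b * (2 * h) ^ 2 + c * (2 * h) ^ 3) = g 0 := by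
    rw [ha, hb, hd, hc, hE]; field_simp; ring
  obtain ⟨x1, m1, z1⟩ := exists_hasDerivAt_eq_zero (a := 0) (b := h / 2) (by linarith)
    (hFc.mono (Set.Icc_subset_Icc le_rfl (by linarith))) (by simp only [v1]; ring)
    (fun x hx => e0 x ⟨by linarith [hx.1], by linarith [hx.2]⟩)
  obtain ⟨x2, m2, z2⟩ := exists_hasDerivAt_eq_zero (a := h / 2) (b := h) (by linarith)
    (hFc.mono (Set.Icc_subset_Icc (by linarith) (by linarith))) (by simp only [v1, v2])
    (fun x hx => e0 x ⟨by linarith [hx.1], by linarith [hx.2]⟩)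
  obtain ⟨x3, m3, z3⟩ := exists_hasDerivAt_eq_zero (a := h) (b := 2 * h) (by linarith)
    (hFc.mono (Set.Icc_subset_Icc (by linarith) (by linarith))) (by simp only [v2, v3])
    (fun x hx => e0 x ⟨by linarith [hx.1], by linarith [hx.2]⟩)
  obtain ⟨l1, r1⟩ := m1
  obtain ⟨l2, r2⟩ := m2
  obtain ⟨l3, r3⟩ := m3
  obtain ⟨y1, ⟨p1, q1⟩, w1⟩ := exists_hasDerivAt_eq_zero (a := x1) (b := x2) (by linarith)
    (fun x hx => (e1 x ⟨by linarith [hx.1], by linarith [hx.2]⟩).continuousAt.continuousWithinAt)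
    (z1.trans z2.symm) (fun x hx => e1 x ⟨by linarith [hx.1], by linarith [hx.2]⟩)
  obtain ⟨y2, ⟨p2, q2⟩, w2⟩ := exists_hasDerivAt_eq_zero (a := x2) (b := x3) (by linarith)
    (fun x hx => (e1 x ⟨by linarith [hx.1], by linarith [hx.2]⟩).continuousAt.continuousWithinAt)
    (z2.trans z3.symm) (fun x hx => e1 x ⟨by linarith [hx.1], by linarith [hx.2]⟩)
  obtain ⟨z, ⟨p, q⟩, w⟩ := exists_hasDerivAt_eq_zero (a := y1) (b := y2) (by linarith)
    (fun x hx => (e2 x ⟨by linarith [hx.1], by linarith [hx.2]⟩).continuousAt.continuousWithinAt)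
    (w1.trans w2.symm) (fun x hx => e2 x ⟨by linarith [hx.1], by linarith [hx.2]⟩)
  have hle := le_csSup hbdd ⟨z, ⟨by linarith, by linarith⟩, rfl⟩
  have hEz : E = g3 z / 2 * h ^ 3 := by
    have : g3 z = c * 6 := by linarith
    rw [this, hc]; field_simp; ring
  rw [← hE, hEz, abs_mul, abs_div, abs_of_pos (pow_pos hh 3), abs_of_pos (two_pos : (0 : ℝ) < 2)]
  gcongr
end
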